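/- Let q be a prime number and s ∈ ℕ. Let P = {(k₁,…,k_s) ∈ ℕ^s : (k₁,…,k_s) ≠ (1,…,1), and for each i = 1,…,s there are a_i ∈ ℕ and 0 ≤ ℓ_i < q^{a_i−1} with k_i = q^{a_i−1} + ℓ_i} (i.e. the leading q-adic digit of each k_i equals 1). Then, writing r_i = len(k_i), the series Σ over all (k₁,…,k_s) ∈ P with r₁+⋯+r_s ≥ 2 of 1/( q^{r₁+⋯+r_s} · (r₁+⋯+r_s)^s · log(r₁+⋯+r_s) ) diverges to infinity. -/

import Mathlib

open MeasureTheory Filter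
open scoped ENNReal

noncomputable section

/-- The base-`q` digit vector `k⃗ = (κ₀, κ₁, κ₂, …)` of a natural number `k`,
with values in `ZMod q`. -/
def digitVec (q k : ℕ) : ℕ → ZMod q := fun i => ((k / q ^ i) % q : ℕ)

/-- `len q k = ⌊log_q k⌋`, the index of the leading base-`q` digit of `k`. -/
def len (q k : ℕ) : ℕ := Nat.log q k

/-- Transpose of an `ℕ × ℕ` matrix over `ZMod q`. -/
def transp {q : ℕ} (C : ℕ → ℕ → ZMod q) : ℕ → ℕ → ZMod q := fun i j => C j i

/-- The matrix `C` applied to the digit vector of `k` (a finite sum, since the digit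
vector of `k` is supported on indices `≤ k`), all arithmetic modulo `q`. -/
def matVec {q : ℕ} (C : ℕ → ℕ → ZMod q) (k : ℕ) : ℕ → ZMod q :=
  fun i => ∑ j ∈ Finset.range (k + 1), C i j * digitVec q k j

/-- `nuLe b m` expresses `ν(b⃗) ≤ -m` for `b⃗ = (b₁, b₂, …) = (b 0, b 1, …)`:
the first `m - 1` coordinates of `b⃗` vanish.  (In particular it holds for `b⃗ = 0⃗`,
where `ν(0⃗) = -∞`.) -/
def nuLe {q : ℕ} (b : ℕ → ZMod q) (m : ℕ) : Prop := ∀ i, i < m - 1 → b i = 0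

/-- `ω_q = exp(2πi/q)`. -/
def omega (q : ℕ) : ℂ := Complex.exp (2 * Real.pi * Complex.I / q)

/-- The value of the `j`-th `q`-adic Walsh function on a digit vector
`v⃗ = (v₁, v₂, …) = (v 0, v 1, …)`: with `j = j₀ + j₁ q + ⋯`, this is
`ω_q^(j₀ v₁ + j₁ v₂ + ⋯)`, the exponent computed in `ZMod q` (a finite sum, since all
base-`q` digits of `j` with index `≥ j` vanish). -/
def wal (q j : ℕ) (v : ℕ → ZMod q) : ℂ :=
  omega q ^ (∑ i ∈ Finset.range (j + 1), digitVec q j i * v i).val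

/-- The digit `ξ_{i+1} ∈ ZMod q` of the `q`-adic expansion
`x = ξ₁ q⁻¹ + ξ₂ q⁻² + ⋯` of `x ∈ [0,1)` (the expansion with infinitely many digits
different from `q - 1`). -/
def realDigit (q : ℕ) (x : ℝ) : ℕ → ZMod q := fun i => ((⌊x * (q : ℝ) ^ (i + 1)⌋ : ℤ) : ZMod q)

/-- The `j`-th `q`-adic Walsh function `wal_j : [0,1) → ℂ`. -/
def walReal (q j : ℕ) (x : ℝ) : ℂ := wal q j (realDigit q x)

/-- The digital sequence over `ZMod q` with generating matrices `C 1, …, C s`: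
the `j`-th coordinate of the `n`-th point is `x_{n,j} = Σ_i (C_j n⃗)_i q^{-(i+1)}`. -/
def digitalSeq {q s : ℕ} (C : Fin s → ℕ → ℕ → ZMod q) (n : ℕ) : Fin s → ℝ :=
  fun j => ∑' i : ℕ, ((matVec (C j) n i).val : ℝ) / (q : ℝ) ^ (i + 1)

/-- The local discrepancy `D(x, N)` of the sequence `y` in `[0,1)^s`. -/
def localDisc {s : ℕ} (y : ℕ → Fin s → ℝ) (x : Fin s → ℝ) (N : ℕ) : ℝ :=
  (Nat.card {n : ℕ | n < N ∧ ∀ j, y n j ∈ Set.Ico 0 (x j)} : ℝ) - N * ∏ j, x j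

/-- The star discrepancy `D*_N` of the sequence `y` in `[0,1)^s`. -/
def starDisc {s : ℕ} (y : ℕ → Fin s → ℝ) (N : ℕ) : ℝ :=
  sSup {d : ℝ | ∃ x : Fin s → ℝ, (∀ j, x j ∈ Set.Icc (0 : ℝ) 1) ∧ d = |localDisc y x N|}

/-- `IsUniformMatrixMeasure μ` says that `μ` is the measure `μ` of the paper on the
space `(ZMod q)^{ℕ×ℕ}` of `ℕ × ℕ` matrices over `ZMod q`: the product over `ℕ × ℕ` of
uniform probability measures on `ZMod q`, characterized as the probability measure
giving each finite cylinder set (finitely many prescribed entries) the measure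
`q^{-(number of prescribed entries)}`. -/
def IsUniformMatrixMeasure {q : ℕ} (μ : Measure (ℕ → ℕ → ZMod q)) : Prop :=
  IsProbabilityMeasure μ ∧
    ∀ (F : Finset (ℕ × ℕ)) (g : ℕ × ℕ → ZMod q),
      μ {C | ∀ p ∈ F, C p.1 p.2 = g p} = ((q : ℝ≥0∞)⁻¹) ^ F.card

/-- `IsUniformMatrixTupleMeasure μs` says that `μs` is the measure `μ_s` of the paper on
the space `((ZMod q)^{ℕ×ℕ})^s` of `s`-tuples of `ℕ × ℕ` matrices over `ZMod q`: the
`s`-fold product of the product over `ℕ × ℕ` of uniform probability measures on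
`ZMod q`, characterized as the probability measure giving each finite cylinder set
(finitely many prescribed entries) the measure `q^{-(number of prescribed entries)}`. -/
def IsUniformMatrixTupleMeasure {q s : ℕ} (μs : Measure (Fin s → ℕ → ℕ → ZMod q)) : Prop :=
  IsProbabilityMeasure μs ∧
    ∀ (F : Finset (Fin s × ℕ × ℕ)) (g : Fin s × ℕ × ℕ → ZMod q),
      μs {C | ∀ p ∈ F, C p.1 p.2.1 p.2.2 = g p} = ((q : ℝ≥0∞)⁻¹) ^ F.card

/-!
For every `r : ι → ℕ` exactly `q ^ ∑ i, r i` tuples `k` with leading digits `1` satisfy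
`len q (k i) = r i` for all `i`, which cancels the factor `q ^ ∑ i, len q (k i)` of the
denominator. Since there are `multichoose s n ≥ n ^ (s - 1) / (s - 1)!` vectors `r : Fin s → ℕ`
with sum `n`, the series dominates a constant multiple of `∑ 1 / (n log n)`, which diverges by
Cauchy condensation.
-/

open Finset Real

theorem len_pow_add {q m l : ℕ} (hq : 2 ≤ q) (hl : l < q ^ m) : len q (q ^ m + l) = m := by
  refine Nat.log_eq_of_pow_le_of_lt_pow (Nat.le_add_right _ _) ?_
  calc q ^ m + l < 2 * q ^ m := by omega
    _ ≤ q ^ (m + 1) := by rw [pow_succ']; gcongr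

/-- The leading base-`q` digit of `k` is `1`; `a - 1` is its position, as in the definition of the
set `P` of the paper. -/
def HasLeadingDigitOne (q k : ℕ) : Prop :=
  ∃ a : ℕ, 1 ≤ a ∧ ∃ l : ℕ, l < q ^ (a - 1) ∧ k = q ^ (a - 1) + l

theorem hasLeadingDigitOne_and_len_eq_iff {q k r : ℕ} (hq : 2 ≤ q) :
    HasLeadingDigitOne q k ∧ len q k = r ↔ k ∈ Ico (q ^ r) (2 * q ^ r) := by
  rw [mem_Ico]
  constructor
  · rintro ⟨⟨a, -, l, hl, rfl⟩, rfl⟩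
    rw [len_pow_add hq hl]
    omega
  · rintro ⟨hle, hlt⟩
    obtain ⟨l, rfl⟩ := Nat.exists_eq_add_of_le hle
    have hl : l < q ^ r := by omega
    exact ⟨⟨r + 1, by omega, l, hl, rfl⟩, len_pow_add hq hl⟩

section Counting

variable {ι : Type*} [Fintype ι]

theorem card_piAntidiag_univ [DecidableEq ι] (n : ℕ) :
    #(piAntidiag (univ : Finset ι) n) = (Fintype.card ι).multichoose n := by
  rw [← Sym.card_sym_eq_multichoose ι n, ← Nat.card_eq_fintype_card,
    Nat.card_congr (Sym.equivNatSumOfFintype ι n),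
    Nat.subtype_card (piAntidiag univ n) fun _ => by simp]

variable (ι) in
/-- The tuples `k : ι → ℕ` with leading base-`q` digits `1` and total length
`∑ i, len q (k i) = n`, as a union of boxes over the possible vectors of lengths. -/
def leadingDigitOneShell [DecidableEq ι] (q n : ℕ) : Finset (ι → ℕ) :=
  (piAntidiag univ n).biUnion fun r => Fintype.piFinset fun i => Ico (q ^ r i) (2 * q ^ r i)

theorem mem_leadingDigitOneShell [DecidableEq ι] {q n : ℕ} (hq : 2 ≤ q) {k : ι → ℕ} :
    k ∈ leadingDigitOneShell ι q n ↔
      (∀ i, HasLeadingDigitOne q (k i)) ∧ ∑ i, len q (k i) = n := by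
  simp only [leadingDigitOneShell, mem_biUnion, mem_piAntidiag, Fintype.mem_piFinset,
    ← hasLeadingDigitOne_and_len_eq_iff hq, forall_and, ← funext_iff]
  constructor
  · rintro ⟨r, ⟨hr, -⟩, hk, rfl⟩
    exact ⟨hk, hr⟩
  · rintro ⟨hk, hn⟩
    exact ⟨fun i => len q (k i), ⟨hn, by simp⟩, hk, rfl⟩

theorem card_leadingDigitOneShell [DecidableEq ι] {q : ℕ} (hq : 2 ≤ q) (n : ℕ) :
    #(leadingDigitOneShell ι q n) = (Fintype.card ι).multichoose n * q ^ n := by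
  rw [leadingDigitOneShell, card_biUnion, ← card_piAntidiag_univ, ← smul_eq_mul]
  · refine sum_eq_card_nsmul fun r hr => ?_
    simp [← (mem_piAntidiag.mp hr).1, prod_pow_eq_pow_sum, two_mul]
  · intro r _ r' _ hne
    refine disjoint_left.mpr fun k hk hk' => hne (funext fun i => ?_)
    simp only [Fintype.mem_piFinset, ← hasLeadingDigitOne_and_len_eq_iff hq] at hk hk'
    rw [← (hk i).2, (hk' i).2]

theorem tsum_hasLeadingDigitOne_eq {q : ℕ} (hq : 2 ≤ q) (S : Set ℕ) (F : ℕ → ℝ≥0∞) :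
    ∑' k : {k : ι → ℕ | (∀ i, HasLeadingDigitOne q (k i)) ∧ ∑ i, len q (k i) ∈ S},
        F (∑ i, len q (k.1 i)) =
      ∑' n : S, (Fintype.card ι).multichoose n * (q : ℝ≥0∞) ^ (n : ℕ) * F n := by
  classical
  have shells : {k : ι → ℕ | (∀ i, HasLeadingDigitOne q (k i)) ∧ ∑ i, len q (k i) ∈ S} =
      ⋃ n ∈ S, ↑(leadingDigitOneShell ι q n) := by
    ext k
    simp [mem_leadingDigitOneShell hq, and_comm]
  have disjoint_shells : S.PairwiseDisjoint fun n => (leadingDigitOneShell ι q n : Set (ι → ℕ)) :=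
    fun n _ n' _ hne => disjoint_coe.mpr <| disjoint_left.mpr fun k hk hk' => hne <|
      ((mem_leadingDigitOneShell hq).mp hk).2.symm.trans ((mem_leadingDigitOneShell hq).mp hk').2
  rw [tsum_congr_set_coe (fun k => F (∑ i, len q (k i))) shells,
    ENNReal.tsum_biUnion' (f := fun k => F (∑ i, len q (k i))) disjoint_shells]
  refine tsum_congr fun n => ?_
  rw [Finset.tsum_subtype' _ fun k : ι → ℕ => F (∑ i, len q (k i)),
    sum_congr rfl fun k hk => by rw [((mem_leadingDigitOneShell hq).mp hk).2]]
  simp [card_leadingDigitOneShell hq]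

end Counting

theorem pow_le_factorial_mul_multichoose (d n : ℕ) :
    n ^ d ≤ d.factorial * (d + 1).multichoose n :=
  calc n ^ d ≤ (n + 1) ^ d := by gcongr; omega
    _ ≤ (n + 1).ascFactorial d := Nat.pow_succ_le_ascFactorial _ _
    _ = d.factorial * (d + 1).multichoose n := by
      rw [Nat.ascFactorial_eq_factorial_mul_choose, Nat.multichoose_eq,
        show d + 1 + n - 1 = n + d by omega, Nat.choose_symm_add]

theorem inv_factorial_mul_inv_mul_log_le {q n : ℕ} (hq : 0 < q) (hn : 2 ≤ n) (d : ℕ) :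
    (d.factorial : ℝ≥0∞)⁻¹ * (ENNReal.ofReal (n * log n))⁻¹ ≤
      (d + 1).multichoose n * (q : ℝ≥0∞) ^ n *
        (ENNReal.ofReal ((q : ℝ) ^ n * n ^ (d + 1) * log n))⁻¹ := by
  have hlog : 0 < log n := log_pos (by exact_mod_cast hn)
  have hcount : (n : ℝ) ^ d ≤ d.factorial * (d + 1).multichoose n := by
    exact_mod_cast pow_le_factorial_mul_multichoose d n
  have hreal : (d.factorial : ℝ)⁻¹ * (n * log n)⁻¹ ≤
      (d + 1).multichoose n * q ^ n * (q ^ n * n ^ (d + 1) * log n)⁻¹ :=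
    calc (d.factorial : ℝ)⁻¹ * (n * log n)⁻¹
        = n ^ d * (d.factorial * n ^ (d + 1) * log n)⁻¹ := by field_simp; ring
      _ ≤ d.factorial * (d + 1).multichoose n * (d.factorial * n ^ (d + 1) * log n)⁻¹ := by gcongr
      _ = (d + 1).multichoose n * q ^ n * (q ^ n * n ^ (d + 1) * log n)⁻¹ := by field_simp
  simpa (disch := positivity) only [ENNReal.ofReal_mul, ENNReal.ofReal_inv_of_pos,
    ENNReal.ofReal_pow, ENNReal.ofReal_natCast] using ENNReal.ofReal_le_ofReal hreal

theorem not_summable_inv_nat_mul_log : ¬ Summable fun n : ℕ => ((n : ℝ) * log n)⁻¹ := by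
  have nonneg : ∀ n : ℕ, 0 ≤ ((n : ℝ) * log n)⁻¹ := fun n => by positivity
  have antitone : ∀ᶠ n : ℕ in atTop, (((n + 1 : ℕ) : ℝ) * log (n + 1 : ℕ))⁻¹ ≤ (n * log n)⁻¹ := by
    filter_upwards [eventually_ge_atTop 2] with n hn
    have : 0 < log n := log_pos (by exact_mod_cast hn)
    gcongr <;> omega
  rw [← summable_condensed_iff_of_eventually_nonneg (.of_forall nonneg) antitone]
  have condensed (k : ℕ) : (2 : ℝ) ^ k * (((2 ^ k : ℕ) : ℝ) * log (2 ^ k : ℕ))⁻¹ =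
      (log 2)⁻¹ * (k : ℝ)⁻¹ := by
    push_cast
    rw [log_pow]
    field_simp
  simp_rw [condensed]
  rw [summable_mul_left_iff (by positivity)]
  exact not_summable_natCast_inv

theorem tsum_inv_nat_mul_log_eq_top :
    ∑' n : Set.Ici 2, (ENNReal.ofReal ((n : ℕ) * log (n : ℕ)))⁻¹ = ⊤ := by
  by_contra h
  have zero_off_Ici : ∀ n ∉ Set.range ((↑) : Set.Ici 2 → ℕ), ((n : ℝ) * log n)⁻¹ = 0 := by
    intro n hn
    have : n < 2 := by simpa using hn
    interval_cases n <;> simp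
  refine not_summable_inv_nat_mul_log
    ((Subtype.val_injective.summable_iff zero_off_Ici).mp <|
      (ENNReal.summable_toReal h).congr fun n => ?_)
  rw [ENNReal.toReal_inv, ENNReal.toReal_ofReal (by positivity), Function.comp_apply]

theorem divergence_series_over_P_general {ι : Type*} [Fintype ι] [Nonempty ι] {q : ℕ}
    (hq : 2 ≤ q) :
    ∑' k : {k : ι → ℕ // (∀ i, HasLeadingDigitOne q (k i)) ∧ k ≠ (fun _ => 1) ∧
        2 ≤ ∑ i, len q (k i)},
      (ENNReal.ofReal ((q : ℝ) ^ (∑ i, len q (k.1 i)) *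
          (∑ i, len q (k.1 i) : ℝ) ^ Fintype.card ι * log (∑ i, len q (k.1 i) : ℝ)))⁻¹ = ⊤ := by
  obtain ⟨d, hd⟩ := Nat.exists_eq_succ_of_ne_zero (Fintype.card_ne_zero (α := ι))
  let F (n : ℕ) : ℝ≥0∞ := (ENNReal.ofReal ((q : ℝ) ^ n * n ^ Fintype.card ι * log n))⁻¹
  have index_eq : {k : ι → ℕ | (∀ i, HasLeadingDigitOne q (k i)) ∧ k ≠ (fun _ => 1) ∧
        2 ≤ ∑ i, len q (k i)} =
      {k | (∀ i, HasLeadingDigitOne q (k i)) ∧ ∑ i, len q (k i) ∈ Set.Ici 2} := by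
    refine Set.ext fun k => and_congr_right fun _ => and_iff_right_of_imp ?_
    rintro hk rfl
    simp [len] at hk
  refine top_unique ?_
  calc ⊤ = ∑' n : Set.Ici 2, (d.factorial : ℝ≥0∞)⁻¹ *
          (ENNReal.ofReal ((n : ℕ) * log (n : ℕ)))⁻¹ := by
        rw [ENNReal.tsum_mul_left, tsum_inv_nat_mul_log_eq_top, ENNReal.mul_top (by simp)]
    _ ≤ ∑' n : Set.Ici 2, (Fintype.card ι).multichoose n * (q : ℝ≥0∞) ^ (n : ℕ) * F n :=
        ENNReal.tsum_le_tsum fun n => by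
          simpa only [F, hd] using inv_factorial_mul_inv_mul_log_le (by omega) n.2 d
    _ = ∑' k : {k : ι → ℕ | (∀ i, HasLeadingDigitOne q (k i)) ∧ k ≠ (fun _ => 1) ∧
          2 ≤ ∑ i, len q (k i)}, F (∑ i, len q (k.1 i)) := by
        rw [← tsum_hasLeadingDigitOne_eq hq,
          tsum_congr_set_coe (fun k => F (∑ i, len q (k i))) index_eq]
    _ = _ := by simp only [F, Nat.cast_sum]; rfl

/-- **Divergence of the series over `P`.**  Let
`P = {(k₁,…,k_s) ∈ ℕ^s : (k₁,…,k_s) ≠ (1,…,1), each k_i = q^{a_i−1} + ℓ_i` with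
`a_i ∈ ℕ, 0 ≤ ℓ_i < q^{a_i−1}}` (i.e. the leading `q`-adic digit of each `k_i` is `1`).
Then, with `r_i = len(k_i)`, the series
`Σ_{(k₁,…,k_s) ∈ P, r₁+⋯+r_s ≥ 2} 1/(q^{r₁+⋯+r_s} (r₁+⋯+r_s)^s log(r₁+⋯+r_s))`
diverges to infinity. -/
theorem divergence_series_over_P (q s : ℕ) (hq : q.Prime) (hs : 1 ≤ s) :
    ∑' k : {k : Fin s → ℕ //
        (∀ i, ∃ a : ℕ, 1 ≤ a ∧ ∃ l : ℕ, l < q ^ (a - 1) ∧ k i = q ^ (a - 1) + l) ∧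
        k ≠ (fun _ => 1) ∧ 2 ≤ ∑ i, len q (k i)},
      (ENNReal.ofReal ((q : ℝ) ^ (∑ i, len q ((k : Fin s → ℕ) i)) *
          ((∑ i, len q ((k : Fin s → ℕ) i)) : ℝ) ^ s *
          Real.log ((∑ i, len q ((k : Fin s → ℕ) i)) : ℝ)))⁻¹
      = ⊤ := by
  have : Nonempty (Fin s) := Fin.pos_iff_nonempty.mp hs
  simpa only [Fintype.card_fin, HasLeadingDigitOne] using
    divergence_series_over_P_general (ι := Fin s) hq.two_le
end
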